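/- arXiv:2208.01989 — 6 statements merged into one kernel-verified Lean document; each statement's English description precedes it below -/
import Mathlib

section
/- Fix real numbers a₀ with 0 < a₀ < 1 and b ∈ ℝ. Set λ = (−15 + √(405 − 210·a₀ + 30·a₀²) + 30·b)/30 and f(x) = (b − 1 − λ)/(a₀ − 1) + x·(1 − x). Then f(x) > 0 for every x ∈ [0,1], and for every x ∈ [0,1] one has ∫₀¹ (f(y) − f(x))·P(x,y) dy + V(x)·f(x) = λ·f(x). (This exhibits an explicit eigenvalue and strictly positive quadratic eigenfunction for the operator L + V of Theorem 3.5.) -/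
open MeasureTheory intervalIntegral

lemma quartic_integral (u v c0 c1 c2 c3 c4 : ℝ) :
    (∫ y in u..v, (c0 + c1 * y + c2 * y ^ 2 + c3 * y ^ 3 + c4 * y ^ 4)) =
      (c0 * v + c1 * v ^ 2 / 2 + c2 * v ^ 3 / 3 + c3 * v ^ 4 / 4 + c4 * v ^ 5 / 5) -
      (c0 * u + c1 * u ^ 2 / 2 + c2 * u ^ 3 / 3 + c3 * u ^ 4 / 4 + c4 * u ^ 5 / 5) := by
  apply integral_eq_sub_of_hasDerivAt
    (f := fun y => c0 * y + c1 * y ^ 2 / 2 + c2 * y ^ 3 / 3 + c3 * y ^ 4 / 4 + c4 * y ^ 5 / 5)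
  · intro y _
    have h := (((((hasDerivAt_id y).const_mul c0).add
      (((hasDerivAt_pow 2 y).const_mul c1).div_const 2)).add
      (((hasDerivAt_pow 3 y).const_mul c2).div_const 3)).add
      (((hasDerivAt_pow 4 y).const_mul c3).div_const 4)).add
      (((hasDerivAt_pow 5 y).const_mul c4).div_const 5)
    refine h.congr_deriv ?_
    norm_num
    ring
  · exact Continuous.intervalIntegrable (by fun_prop) _ _

/-- The same quartic, in the factored form in which it occurs below. -/
lemma piece_integral (u v a s Q : ℝ) (F : ℝ → ℝ)
    (hF : ∀ y ∈ Set.uIcc u v, F y =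
      (y * (1 - y) - Q) * (a + 6 * (1 - a) * (s + y) * (1 - (s + y)))) :
    IntervalIntegrable F volume u v ∧
    (∫ y in u..v, F y) =
      ∫ y in u..v, ((-Q * (a + 6 * (1 - a) * s * (1 - s))) +
        ((a + 6 * (1 - a) * s * (1 - s)) - Q * (6 * (1 - a) * (1 - 2 * s))) * y +
        (-(a + 6 * (1 - a) * s * (1 - s)) + 6 * (1 - a) * (1 - 2 * s) + Q * (6 * (1 - a))) * y ^ 2 +
        (-(6 * (1 - a) * (1 - 2 * s)) - 6 * (1 - a)) * y ^ 3 + (6 * (1 - a)) * y ^ 4) := by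
  constructor
  · have hc : Continuous (fun y : ℝ =>
      (y * (1 - y) - Q) * (a + 6 * (1 - a) * (s + y) * (1 - (s + y)))) := by fun_prop
    exact (hc.continuousOn.congr hF).intervalIntegrable
  · apply integral_congr
    intro y hy
    simp only [hF y hy]
    ring

/-- Theorem 3.5 of the paper: explicit eigenvalue and strictly positive quadratic
eigenfunction for `L + V`, where `L` has kernel `P` built from the degree-two
polynomial `g` and `V(x) = b + (1 − a₀)·x·(1 − x)`. -/
theorem explicit_eigenfunction_degree_two (a₀ b : ℝ) (h0 : 0 < a₀) (h1 : a₀ < 1) :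
    ∀ (lam : ℝ) (g f : ℝ → ℝ) (P : ℝ → ℝ → ℝ) (V : ℝ → ℝ),
      lam = (-15 + Real.sqrt (405 - 210 * a₀ + 30 * a₀ ^ 2) + 30 * b) / 30 →
      g = (fun x : ℝ => a₀ + 6 * (1 - a₀) * x * (1 - x)) →
      P = (fun x y : ℝ => if x + y < 1 then g (x + y) else g (x + y - 1)) →
      V = (fun x : ℝ => b + (1 - a₀) * x * (1 - x)) →
      f = (fun x : ℝ => (b - 1 - lam) / (a₀ - 1) + x * (1 - x)) →
      (∀ x ∈ Set.Icc (0:ℝ) 1, 0 < f x) ∧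
      (∀ x ∈ Set.Icc (0:ℝ) 1,
        (∫ y in (0:ℝ)..1, (f y - f x) * P x y) + V x * f x = lam * f x) := by
  intro lam g f P V hl hg hP hV hf
  have hD : 0 ≤ 405 - 210 * a₀ + 30 * a₀ ^ 2 := by nlinarith
  have hS := Real.sq_sqrt hD
  have hpos : 15 < Real.sqrt (405 - 210 * a₀ + 30 * a₀ ^ 2) := by
    apply Real.lt_sqrt_of_sq_lt
    nlinarith
  set S := Real.sqrt (405 - 210 * a₀ + 30 * a₀ ^ 2) with hSdef
  have hne : a₀ - 1 ≠ 0 := by linarith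
  obtain ⟨c, hc⟩ : ∃ c, c = (b - 1 - lam) / (a₀ - 1) := ⟨_, rfl⟩
  have hc1 : c * (a₀ - 1) = b - 1 - lam := by rw [hc]; field_simp
  have hlam : lam = b - 1 + (1 - a₀) * c := by linarith
  have hm : (lam - b) * (lam - b + 1) = (1 - a₀) * (6 - a₀) / 30 := by
    rw [hl]; nlinarith
  have hcm : c * (lam - b) = (6 - a₀) / 30 := by
    have h2 : (1 - a₀) ≠ 0 := by linarith
    apply mul_left_cancel₀ h2
    have : (1 - a₀) * c = lam - b + 1 := by linarith
    calc (1 - a₀) * (c * (lam - b)) = ((1 - a₀) * c) * (lam - b) := by ring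
      _ = (lam - b) * (lam - b + 1) := by rw [this]; ring
      _ = _ := by rw [hm]; ring
  rw [← hc] at hf
  have hcpos : 0 < c := by
    rw [hc]
    apply div_pos_of_neg_of_neg <;> linarith
  refine ⟨?_, ?_⟩
  · rintro x ⟨hx0, hx1⟩
    simp only [hf]
    have := mul_nonneg hx0 (sub_nonneg.2 hx1)
    linarith
  · rintro x ⟨hx0, hx1⟩
    obtain ⟨i1, e1⟩ := piece_integral 0 (1 - x) a₀ x (x * (1 - x))
      (fun y => (f y - f x) * P x y) (by
        intro y hy
        rw [Set.uIcc_of_le (by linarith)] at hy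
        simp only [hf, hP, hg]
        split_ifs with h
        · ring
        · have : y = 1 - x := by linarith [hy.2]
          subst this
          ring)
    obtain ⟨i2, e2⟩ := piece_integral (1 - x) 1 a₀ (x - 1) (x * (1 - x))
      (fun y => (f y - f x) * P x y) (by
        intro y hy
        rw [Set.uIcc_of_le (by linarith)] at hy
        simp only [hf, hP, hg]
        rw [if_neg (by linarith [hy.1])]
        ring)
    rw [← integral_add_adjacent_intervals i1 i2, e1, e2, quartic_integral, quartic_integral]
    simp only [hV, hf]
    linear_combination (-(x * (1 - x))) * hlam - hcm
end

section
/- For every continuous f : [0,1] → ℝ, ∫₀¹ (𝓛̃ f)(x)·φ(x)·ℓ̃(x) dx = 0. Hence the probability measure on [0,1] whose density is proportional to φ·ℓ̃ is invariant for the generator 𝓛̃ (Theorem 4.1). -/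
open MeasureTheory intervalIntegral

/-- `γ̃(x) = ∫₀¹ (φ(y)/φ(x))·P(x,y) dy`. -/
noncomputable def gammaTilde (P : ℝ → ℝ → ℝ) (phi : ℝ → ℝ) (x : ℝ) : ℝ :=
  ∫ y in (0:ℝ)..1, (phi y / phi x) * P x y

/-- The generator `(𝓛̃ f)(x) = ∫₀¹ (f(y) − f(x))·(φ(y)/φ(x))·P(x,y) dy`. -/
noncomputable def Ltilde (P : ℝ → ℝ → ℝ) (phi : ℝ → ℝ) (f : ℝ → ℝ) (x : ℝ) : ℝ :=
  ∫ y in (0:ℝ)..1, (f y - f x) * ((phi y / phi x) * P x y)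

/-- Theorem 4.1 of the paper: the density proportional to `φ·ℓ̃` is invariant for the
generator `𝓛̃`, i.e. `∫₀¹ (𝓛̃ f)(x)·φ(x)·ℓ̃(x) dx = 0` for every continuous `f`. -/
theorem invariant_density_Ltilde
    (P : ℝ → ℝ → ℝ)
    (hP : ContinuousOn (fun p : ℝ × ℝ => P p.1 p.2) (Set.Icc 0 1 ×ˢ Set.Icc 0 1))
    (phi : ℝ → ℝ) (hphi : ContinuousOn phi (Set.Icc 0 1))
    (hphipos : ∀ x ∈ Set.Icc (0:ℝ) 1, 0 < phi x)
    (ltilde : ℝ → ℝ) (hltilde : ContinuousOn ltilde (Set.Icc 0 1))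
    (heig : ∀ x ∈ Set.Icc (0:ℝ) 1,
      ∫ y in (0:ℝ)..1, ltilde y * P y x = gammaTilde P phi x * ltilde x)
    (f : ℝ → ℝ) (hf : ContinuousOn f (Set.Icc 0 1)) :
    ∫ x in (0:ℝ)..1, Ltilde P phi f x * (phi x * ltilde x) = 0 := by
  set G : ℝ → ℝ → ℝ := fun x y => (f y * phi y) * (ltilde x * P x y) with hG
  have h01 : (0:ℝ) ≤ 1 := zero_le_one
  have hGc : ContinuousOn (Function.uncurry G) (Set.Icc 0 1 ×ˢ Set.Icc 0 1) := by
    have m1 : Set.MapsTo (Prod.fst : ℝ × ℝ → ℝ)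
        (Set.Icc 0 1 ×ˢ Set.Icc 0 1) (Set.Icc 0 1) := fun p hp => hp.1
    have m2 : Set.MapsTo (Prod.snd : ℝ × ℝ → ℝ)
        (Set.Icc 0 1 ×ˢ Set.Icc 0 1) (Set.Icc 0 1) := fun p hp => hp.2
    exact ((hf.comp continuousOn_snd m2).mul (hphi.comp continuousOn_snd m2)).mul
      ((hltilde.comp continuousOn_fst m1).mul hP)
  have hGi : Integrable (Function.uncurry G)
      ((volume.restrict (Set.Ioc (0:ℝ) 1)).prod (volume.restrict (Set.Ioc (0:ℝ) 1))) := by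
    rw [Measure.prod_restrict]
    have h : IntegrableOn (Function.uncurry G) (Set.Icc (0:ℝ) 1 ×ˢ Set.Icc (0:ℝ) 1)
        (volume.prod volume) :=
      hGc.integrableOn_compact (isCompact_Icc.prod isCompact_Icc)
    exact h.mono_set (Set.prod_mono Set.Ioc_subset_Icc_self Set.Ioc_subset_Icc_self)
  have key : ∀ x ∈ Set.Icc (0:ℝ) 1, Ltilde P phi f x * (phi x * ltilde x)
      = (∫ y in (0:ℝ)..1, G x y) - ∫ y in (0:ℝ)..1, G y x := by
    intro x hx
    have hne : phi x ≠ 0 := (hphipos x hx).ne'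
    have hPx : ContinuousOn (fun y => P x y) (Set.Icc 0 1) :=
      hP.comp (f := fun y : ℝ => (x, y)) (by fun_prop) (fun y hy => ⟨hx, hy⟩)
    have hk : ContinuousOn (fun y => (phi y / phi x) * P x y) (Set.Icc 0 1) :=
      (hphi.div_const _).mul hPx
    have i1 : IntervalIntegrable (fun y => f y * ((phi y / phi x) * P x y)) volume 0 1 :=
      (hf.mul hk).intervalIntegrable_of_Icc h01
    have i2 : IntervalIntegrable (fun y => f x * ((phi y / phi x) * P x y)) volume 0 1 :=
      (continuousOn_const.mul hk).intervalIntegrable_of_Icc h01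
    have e1 : Ltilde P phi f x = (∫ y in (0:ℝ)..1, f y * ((phi y / phi x) * P x y))
        - f x * gammaTilde P phi x := by
      unfold Ltilde gammaTilde
      rw [← intervalIntegral.integral_const_mul, ← intervalIntegral.integral_sub i1 i2]
      simp only [sub_mul]
    have e2 : ∫ y in (0:ℝ)..1, G y x = (f x * phi x) * (gammaTilde P phi x * ltilde x) := by
      rw [← heig x hx, ← intervalIntegral.integral_const_mul]
    have e3 : ∫ y in (0:ℝ)..1, G x y
        = (∫ y in (0:ℝ)..1, f y * ((phi y / phi x) * P x y)) * (phi x * ltilde x) := by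
      rw [← intervalIntegral.integral_mul_const]
      congr 1
      funext y
      simp only [hG]
      field_simp
    rw [e1, e2, e3]
    ring
  have hcongr : ∫ x in (0:ℝ)..1, Ltilde P phi f x * (phi x * ltilde x)
      = ∫ x in (0:ℝ)..1, ((∫ y in (0:ℝ)..1, G x y) - ∫ y in (0:ℝ)..1, G y x) := by
    apply intervalIntegral.integral_congr
    intro x hx
    rw [Set.uIcc_of_le h01] at hx
    exact key x hx
  rw [hcongr]
  simp only [intervalIntegral.integral_of_le h01]
  have hs := MeasureTheory.integral_sub hGi.integral_prod_left hGi.integral_prod_right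
  simp only [Function.uncurry_apply_pair] at hs
  rw [hs, MeasureTheory.integral_integral_swap hGi, sub_self]
end

section
/- The entropy production rate is nonnegative: ∫₀¹ ∫₀¹ log( P(x,y) / P(y,x) )·P(x,y)·θ(x) dy dx ≥ 0. -/
open MeasureTheory intervalIntegral

lemma aux_inner (K : ℝ → ℝ → ℝ)
    (hK : ContinuousOn (fun p : ℝ × ℝ => K p.1 p.2) (Set.Icc 0 1 ×ˢ Set.Icc 0 1))
    (x : ℝ) (hx : x ∈ Set.Icc (0:ℝ) 1) : IntervalIntegrable (K x) volume 0 1 := by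
  apply ContinuousOn.intervalIntegrable
  rw [Set.uIcc_of_le zero_le_one]
  exact hK.comp (f := fun y : ℝ => ((x, y) : ℝ × ℝ)) (by fun_prop) (fun y hy => ⟨hx, hy⟩)

lemma aux_prod (K : ℝ → ℝ → ℝ)
    (hK : ContinuousOn (fun p : ℝ × ℝ => K p.1 p.2) (Set.Icc 0 1 ×ˢ Set.Icc 0 1)) :
    Integrable (Function.uncurry K)
      (((volume : Measure ℝ).restrict (Set.Ioc 0 1)).prod
        ((volume : Measure ℝ).restrict (Set.Ioc 0 1))) := by
  rw [Measure.prod_restrict]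
  have h : IntegrableOn (Function.uncurry K) (Set.Icc 0 1 ×ˢ Set.Icc 0 1)
      ((volume : Measure ℝ).prod (volume : Measure ℝ)) :=
    ContinuousOn.integrableOn_compact (isCompact_Icc.prod isCompact_Icc) hK
  exact h.mono_set (Set.prod_mono Set.Ioc_subset_Icc_self Set.Ioc_subset_Icc_self)

lemma aux_outer (K : ℝ → ℝ → ℝ)
    (hK : ContinuousOn (fun p : ℝ × ℝ => K p.1 p.2) (Set.Icc 0 1 ×ˢ Set.Icc 0 1)) :
    IntervalIntegrable (fun x => ∫ y in (0:ℝ)..1, K x y) volume 0 1 := by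
  rw [intervalIntegrable_iff_integrableOn_Ioc_of_le zero_le_one]
  simp only [intervalIntegral.integral_of_le (zero_le_one (α := ℝ))]
  exact (aux_prod K hK).integral_prod_left

lemma aux_swap (K : ℝ → ℝ → ℝ)
    (hK : ContinuousOn (fun p : ℝ × ℝ => K p.1 p.2) (Set.Icc 0 1 ×ˢ Set.Icc 0 1)) :
    ∫ x in (0:ℝ)..1, ∫ y in (0:ℝ)..1, K x y = ∫ y in (0:ℝ)..1, ∫ x in (0:ℝ)..1, K x y := by
  simp only [intervalIntegral.integral_of_le (zero_le_one (α := ℝ))]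
  exact MeasureTheory.integral_integral_swap (aux_prod K hK)

lemma aux_pointwise (p q s t : ℝ) (hp : 0 < p) (hq : 0 < q) (hs : 0 < s) (ht : 0 < t) :
    (p * s - t * q) + (Real.log t * p * s - Real.log s * p * s)
      ≤ Real.log (p / q) * p * s := by
  have h1 := Real.log_le_sub_one_of_pos (show 0 < (t * q) / (p * s) by positivity)
  rw [Real.log_div (by positivity) (by positivity), Real.log_mul ht.ne' hq.ne',
    Real.log_mul hp.ne' hs.ne'] at h1
  have h2 := mul_le_mul_of_nonneg_right h1 (show 0 ≤ p * s by positivity)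
  have h3 : ((t * q) / (p * s) - 1) * (p * s) = t * q - p * s := by field_simp
  rw [Real.log_div hp.ne' hq.ne']
  rw [h3] at h2
  linarith

/-- Proposition 5.4 of the paper: the entropy production rate
`ep = ∫₀¹ ∫₀¹ log(P(x,y)/P(y,x))·P(x,y)·θ(x) dy dx` is nonnegative. -/
theorem entropy_production_nonneg
    (P : ℝ → ℝ → ℝ)
    (hP : ContinuousOn (fun p : ℝ × ℝ => P p.1 p.2) (Set.Icc 0 1 ×ˢ Set.Icc 0 1))
    (hPpos : ∀ x ∈ Set.Icc (0:ℝ) 1, ∀ y ∈ Set.Icc (0:ℝ) 1, 0 < P x y)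
    (hPint : ∀ x ∈ Set.Icc (0:ℝ) 1, ∫ y in (0:ℝ)..1, P x y = 1)
    (theta : ℝ → ℝ) (htheta : ContinuousOn theta (Set.Icc 0 1))
    (hthetapos : ∀ x ∈ Set.Icc (0:ℝ) 1, 0 < theta x)
    (hthetaint : ∫ x in (0:ℝ)..1, theta x = 1)
    (hthetainv : ∀ x ∈ Set.Icc (0:ℝ) 1, ∫ y in (0:ℝ)..1, theta y * P y x = theta x) :
    0 ≤ ∫ x in (0:ℝ)..1, ∫ y in (0:ℝ)..1,
        Real.log (P x y / P y x) * P x y * theta x := by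
  have hP' : ContinuousOn (fun p : ℝ × ℝ => P p.2 p.1) (Set.Icc 0 1 ×ˢ Set.Icc 0 1) :=
    hP.comp (f := fun p : ℝ × ℝ => (p.2, p.1)) (by fun_prop) (fun p hp => ⟨hp.2, hp.1⟩)
  have ht1 : ContinuousOn (fun p : ℝ × ℝ => theta p.1) (Set.Icc 0 1 ×ˢ Set.Icc 0 1) :=
    htheta.comp (f := fun p : ℝ × ℝ => p.1) (by fun_prop) (fun p hp => hp.1)
  have ht2 : ContinuousOn (fun p : ℝ × ℝ => theta p.2) (Set.Icc 0 1 ×ˢ Set.Icc 0 1) :=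
    htheta.comp (f := fun p : ℝ × ℝ => p.2) (by fun_prop) (fun p hp => hp.2)
  have hl : ContinuousOn (fun x => Real.log (theta x)) (Set.Icc 0 1) :=
    htheta.log (fun x hx => (hthetapos x hx).ne')
  have hl1 := ht1.log (fun p hp => (hthetapos p.1 hp.1).ne')
  have hl2 := ht2.log (fun p hp => (hthetapos p.2 hp.2).ne')
  have cA := hP.mul ht1
  have cB := ht2.mul hP'
  have cC := (hl2.mul hP).mul ht1
  have cD := (hl1.mul hP).mul ht1
  have cF := (((hP.div hP' (fun p hp => (hPpos p.2 hp.2 p.1 hp.1).ne')).log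
    (fun p hp => (div_pos (hPpos p.1 hp.1 p.2 hp.2) (hPpos p.2 hp.2 p.1 hp.1)).ne')).mul
    hP).mul ht1
  have iA := aux_inner (fun x y => P x y * theta x) cA
  have iB := aux_inner (fun x y => theta y * P y x) cB
  have iC := aux_inner (fun x y => Real.log (theta y) * P x y * theta x) cC
  have iD := aux_inner (fun x y => Real.log (theta x) * P x y * theta x) cD
  have iF := aux_inner (fun x y => Real.log (P x y / P y x) * P x y * theta x) cF
  have oC := aux_outer (fun x y => Real.log (theta y) * P x y * theta x) cC
  have oF := aux_outer (fun x y => Real.log (P x y / P y x) * P x y * theta x) cF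
  have sC := aux_swap (fun x y => Real.log (theta y) * P x y * theta x) cC
  have oL : IntervalIntegrable (fun x => Real.log (theta x) * theta x) volume 0 1 := by
    apply ContinuousOn.intervalIntegrable
    rw [Set.uIcc_of_le zero_le_one]
    exact hl.mul htheta
  have key : ∫ x in (0:ℝ)..1, ((∫ y in (0:ℝ)..1, Real.log (theta y) * P x y * theta x)
      - Real.log (theta x) * theta x) = 0 := by
    rw [intervalIntegral.integral_sub oC oL, sC, sub_eq_zero]
    apply intervalIntegral.integral_congr
    intro y hy
    rw [Set.uIcc_of_le zero_le_one] at hy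
    simp only
    rw [← hthetainv y hy]
    rw [← intervalIntegral.integral_const_mul, hthetainv y hy]
    congr 1; ext x; ring
  refine key.symm.le.trans ?_
  apply intervalIntegral.integral_mono_on zero_le_one (oC.sub oL) oF
  intro x hx
  have e : ∫ y in (0:ℝ)..1, ((P x y * theta x - theta y * P y x)
      + (Real.log (theta y) * P x y * theta x - Real.log (theta x) * P x y * theta x))
      = (∫ y in (0:ℝ)..1, Real.log (theta y) * P x y * theta x)
      - Real.log (theta x) * theta x := by
    rw [intervalIntegral.integral_add ((iA x hx).sub (iB x hx)) ((iC x hx).sub (iD x hx)),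
      intervalIntegral.integral_sub (iA x hx) (iB x hx),
      intervalIntegral.integral_sub (iC x hx) (iD x hx), hthetainv x hx]
    simp only [intervalIntegral.integral_mul_const, intervalIntegral.integral_const_mul,
      hPint x hx]
    ring
  rw [← e]
  apply intervalIntegral.integral_mono_on zero_le_one
    (((iA x hx).sub (iB x hx)).add ((iC x hx).sub (iD x hx))) (iF x hx)
  intro y hy
  exact aux_pointwise _ _ _ _ (hPpos x hx y hy) (hPpos y hy x hx) (hthetapos x hx) (hthetapos y hy)
end

section
/- For every n ≥ 1 and all x, y ∈ [0,1], the iterated kernel satisfies P^n(x,y) = cos(2π(x−y))/2^{2n−1} + 1. -/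
open MeasureTheory intervalIntegral

/-- The cosine kernel `P(x,y) = cos(2π(x−y))/2 + 1`. -/
noncomputable def Pker (x y : ℝ) : ℝ := Real.cos (2 * Real.pi * (x - y)) / 2 + 1

/-- The iterated kernels: `Pn 0 = P` (so `Pn (n-1)` is `P^n`), and
`P^{n+1}(x,y) = ∫₀¹ P^n(x,z)·P(z,y) dz`. -/
noncomputable def Pn : ℕ → ℝ → ℝ → ℝ
  | 0 => Pker
  | n + 1 => fun x y => ∫ z in (0:ℝ)..1, Pn n x z * Pker z y

lemma cos_step (c x y : ℝ) :
    ∫ z in (0:ℝ)..1, (c * Real.cos (2 * Real.pi * (x - z)) + 1) * Pker z y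
      = c / 4 * Real.cos (2 * Real.pi * (x - y)) + 1 := by
  have hpi := Real.pi_ne_zero
  have hd : ∀ z ∈ Set.uIcc (0:ℝ) 1, HasDerivAt (fun z : ℝ =>
      c / 4 * Real.cos (2 * Real.pi * (x - y)) * z
      - c / (16 * Real.pi) * Real.sin (2 * Real.pi * (x + y - 2 * z))
      - c / (2 * Real.pi) * Real.sin (2 * Real.pi * (x - z))
      + 1 / (4 * Real.pi) * Real.sin (2 * Real.pi * (z - y)) + z)
      ((c * Real.cos (2 * Real.pi * (x - z)) + 1) * Pker z y) z := by
    intro z _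
    have h0 := hasDerivAt_id' z
    have h1 := (((h0.const_mul 2).const_sub (x + y)).const_mul (2 * Real.pi)).sin
    have h2 := ((h0.const_sub x).const_mul (2 * Real.pi)).sin
    have h3 := ((h0.sub_const y).const_mul (2 * Real.pi)).sin
    have h4 := ((((h0.const_mul (c / 4 * Real.cos (2 * Real.pi * (x - y)))).sub
      (h1.const_mul (c / (16 * Real.pi)))).sub (h2.const_mul (c / (2 * Real.pi)))).add
      (h3.const_mul (1 / (4 * Real.pi)))).add h0
    refine h4.congr_deriv ?_
    have e1 : 2 * Real.pi * (x - y) = 2 * Real.pi * (x - z) + 2 * Real.pi * (z - y) := by ring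
    have e2 : 2 * Real.pi * (x + y - 2 * z)
      = 2 * Real.pi * (x - z) - 2 * Real.pi * (z - y) := by ring
    rw [e1, e2, Real.cos_add, Real.cos_sub, Pker]
    field_simp
    ring
  rw [integral_eq_sub_of_hasDerivAt hd]
  · have e1 : 2 * Real.pi * (x + y - 2 * 1)
      = 2 * Real.pi * (x + y - 2 * 0) - (2 : ℕ) * (2 * Real.pi) := by push_cast; ring
    have e2 : 2 * Real.pi * (x - 1) = 2 * Real.pi * (x - 0) - 2 * Real.pi := by ring
    have e3 : 2 * Real.pi * (1 - y) = 2 * Real.pi * (0 - y) + 2 * Real.pi := by ring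
    rw [e1, e2, e3, Real.sin_sub_nat_mul_two_pi, Real.sin_sub_two_pi, Real.sin_add_two_pi]
    ring
  · apply Continuous.intervalIntegrable
    unfold Pker
    fun_prop

lemma Pn_eq (n : ℕ) : ∀ x y : ℝ,
    Pn n x y = (1 / 2 ^ (2 * n + 1)) * Real.cos (2 * Real.pi * (x - y)) + 1 := by
  induction n with
  | zero => intro x y; simp only [Pn, Pker]; ring
  | succ k ih =>
    intro x y
    simp only [Pn, ih]
    rw [cos_step]
    congr 2
    rw [show 2 * (k + 1) + 1 = (2 * k + 1) + 2 by ring, pow_add _ (2 * k + 1) 2]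
    field_simp
    norm_num

/-- Example 2.1 of the paper: `P^n(x,y) = cos(2π(x−y))/2^{2n−1} + 1` for all `n ≥ 1`. -/
theorem iterated_cosine_kernel :
    ∀ n : ℕ, 1 ≤ n → ∀ x ∈ Set.Icc (0:ℝ) 1, ∀ y ∈ Set.Icc (0:ℝ) 1,
      Pn (n - 1) x y = Real.cos (2 * Real.pi * (x - y)) / 2 ^ (2 * n - 1) + 1 := by
  intro n hn x _ y _
  obtain ⟨k, rfl⟩ : ∃ k, n = k + 1 := ⟨n - 1, by omega⟩
  rw [show k + 1 - 1 = k by omega, show 2 * (k + 1) - 1 = 2 * k + 1 by omega, Pn_eq]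
  ring
end

section
/- For every t ≥ 0 and all x, y ∈ [0,1], the series Σ_{k=1}^{∞} (t^k/k!)·Q_k(x,y) converges absolutely and its sum is K_t(x,y) = 2·cos(2π(x−y))·(e^{−3t/4} − e^{−t}) + (1 − e^{−t}). -/
open MeasureTheory intervalIntegral

/-- `Q_k(x,y) = Σ_{j=1}^{k} (−1)^{k−j}·(k choose j)·P^j(x,y)` (so `Qk 0 = 0`). -/
noncomputable def Qk (k : ℕ) (x y : ℝ) : ℝ :=
  ∑ j ∈ Finset.Icc 1 k, (-1 : ℝ) ^ (k - j) * (k.choose j : ℝ) * Pn (j - 1) x y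

theorem ck_int (b x y : ℝ) :
    ∫ z in (0:ℝ)..1, (1 + b * Real.cos (2 * Real.pi * (x - z))) * Pker z y
      = 1 + b / 4 * Real.cos (2 * Real.pi * (x - y)) := by
  have hpi : Real.pi ≠ 0 := Real.pi_ne_zero
  have key : ∀ z ∈ Set.uIcc (0:ℝ) 1, HasDerivAt (fun z : ℝ =>
      z - b * Real.sin (2 * Real.pi * (x - z)) / (2 * Real.pi)
        + Real.sin (2 * Real.pi * (z - y)) / (4 * Real.pi)
        + b / 4 * (z * Real.cos (2 * Real.pi * (x - y))
          - Real.sin (2 * Real.pi * (x + y - 2 * z)) / (4 * Real.pi)))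
      ((1 + b * Real.cos (2 * Real.pi * (x - z))) * Pker z y) z := by
    intro z _
    have hid := hasDerivAt_id' z
    have h1 := (((hid.const_sub x).const_mul (2 * Real.pi)).sin.const_mul b).div_const
      (2 * Real.pi)
    have h2 := ((hid.sub_const y).const_mul (2 * Real.pi)).sin.div_const (4 * Real.pi)
    have h3 := ((((hid.const_mul 2).const_sub (x + y)).const_mul (2 * Real.pi)).sin).div_const
      (4 * Real.pi)
    have h4 := ((hid.mul_const (Real.cos (2 * Real.pi * (x - y)))).sub h3).const_mul (b / 4)
    have h := ((hid.sub h1).add h2).add h4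
    refine h.congr_deriv ?_
    have e1 : 2 * Real.pi * (x - y) = 2 * Real.pi * (x - z) + 2 * Real.pi * (z - y) := by ring
    have e2 : 2 * Real.pi * (x + y - 2 * z)
      = 2 * Real.pi * (x - z) - 2 * Real.pi * (z - y) := by ring
    rw [e1, e2, Real.cos_add, Real.cos_sub, Pker]
    field_simp
    ring
  rw [intervalIntegral.integral_eq_sub_of_hasDerivAt key]
  · have s2 : Real.sin (2 * Real.pi * (1 - y)) = Real.sin (2 * Real.pi * (0 - y)) := by
      rw [← Real.sin_add_two_pi (2 * Real.pi * (0 - y))]; congr 1; ring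
    have s3 : Real.sin (2 * Real.pi * (x + y - 2 * 1))
        = Real.sin (2 * Real.pi * (x + y - 2 * 0)) := by
      rw [← Real.sin_sub_two_pi (2 * Real.pi * (x + y - 2 * 0)),
        ← Real.sin_sub_two_pi (2 * Real.pi * (x + y - 2 * 0) - 2 * Real.pi)]
      congr 1; ring
    have s1' : Real.sin (2 * Real.pi * (x - 1)) = Real.sin (2 * Real.pi * (x - 0)) := by
      rw [← Real.sin_sub_two_pi (2 * Real.pi * (x - 0))]; congr 1; ring
    rw [s1', s2, s3]
    ring
  · apply Continuous.intervalIntegrable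
    unfold Pker
    fun_prop

theorem ck_Pn (n : ℕ) (x y : ℝ) :
    Pn n x y = 1 + 2 * (1 / 4) ^ (n + 1) * Real.cos (2 * Real.pi * (x - y)) := by
  induction n generalizing y with
  | zero => simp only [Pn, Pker]; ring
  | succ n ih =>
    simp only [Pn, ih]
    rw [ck_int]
    ring

theorem ck_Qk (k : ℕ) (x y : ℝ) :
    Qk k x y = 2 * Real.cos (2 * Real.pi * (x - y)) * ((-3 / 4) ^ k - (-1) ^ k)
      + (0 ^ k - (-1) ^ k) := by
  set c := Real.cos (2 * Real.pi * (x - y)) with hc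
  have h1 : Qk k x y = ∑ j ∈ Finset.Icc 1 k,
      (-1 : ℝ) ^ (k - j) * (k.choose j : ℝ) * (1 + 2 * (1 / 4) ^ j * c) := by
    unfold Qk
    refine Finset.sum_congr rfl fun j hj => ?_
    have := (Finset.mem_Icc.1 hj).1
    rw [ck_Pn, Nat.sub_add_cancel this]
  have h2 : ∑ j ∈ Finset.range (k + 1),
      (-1 : ℝ) ^ (k - j) * (k.choose j : ℝ) * (1 + 2 * (1 / 4) ^ j * c)
      = Qk k x y + (-1) ^ k * (1 + 2 * c) := by
    rw [h1, Finset.range_eq_Ico, Finset.sum_eq_sum_Ico_succ_bot (Nat.succ_pos k), add_comm]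
    simp
    rfl
  have h3 : ∑ j ∈ Finset.range (k + 1),
      (-1 : ℝ) ^ (k - j) * (k.choose j : ℝ) * (1 + 2 * (1 / 4) ^ j * c)
      = (1 + -1) ^ k + 2 * c * (1 / 4 + -1) ^ k := by
    rw [add_pow, add_pow, Finset.mul_sum, ← Finset.sum_add_distrib]
    refine Finset.sum_congr rfl fun j _ => ?_
    rw [one_pow]
    ring
  have e1 : (1 + -1 : ℝ) = 0 := by norm_num
  have e2 : (1 / 4 + -1 : ℝ) = -3 / 4 := by norm_num
  rw [e1, e2] at h3
  linarith

theorem ck_exp (t a : ℝ) :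
    HasSum (fun k : ℕ => t ^ k / (k.factorial : ℝ) * a ^ k) (Real.exp (a * t)) := by
  have := NormedSpace.expSeries_div_hasSum_exp (a * t)
  rw [← Real.exp_eq_exp_ℝ] at this
  refine (congrArg (fun f : ℕ → ℝ => HasSum f _) (funext ?_)).mpr this
  intro k
  rw [mul_pow]; ring

/-- Example 2.1 of the paper: the series `Σ_{k≥1} (t^k/k!)·Q_k(x,y)` converges absolutely
and its sum is `K_t(x,y) = 2·cos(2π(x−y))·(e^{−3t/4} − e^{−t}) + (1 − e^{−t})`.
(The `k = 0` term of the `tsum` below vanishes, since `Qk 0 = 0`.) -/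
theorem cosine_kernel_Kt (t : ℝ) (ht : 0 ≤ t)
    (x : ℝ) (hx : x ∈ Set.Icc (0:ℝ) 1) (y : ℝ) (hy : y ∈ Set.Icc (0:ℝ) 1) :
    Summable (fun k : ℕ => |t ^ k / (k.factorial : ℝ) * Qk k x y|) ∧
    ∑' k : ℕ, t ^ k / (k.factorial : ℝ) * Qk k x y
      = 2 * Real.cos (2 * Real.pi * (x - y)) * (Real.exp (-3 * t / 4) - Real.exp (-t))
        + (1 - Real.exp (-t)) := by
  have h : HasSum (fun k : ℕ => t ^ k / (k.factorial : ℝ) * Qk k x y)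
      (2 * Real.cos (2 * Real.pi * (x - y)) * (Real.exp (-3 * t / 4) - Real.exp (-t))
        + (1 - Real.exp (-t))) := by
    have h := (((ck_exp t (-3 / 4)).sub (ck_exp t (-1))).mul_left
      (2 * Real.cos (2 * Real.pi * (x - y)))).add ((ck_exp t 0).sub (ck_exp t (-1)))
    have e1 : -3 / 4 * t = -3 * t / 4 := by ring
    rw [e1, zero_mul, Real.exp_zero, neg_one_mul] at h
    refine (congrArg (fun f : ℕ → ℝ => HasSum f _) (funext ?_)).mpr h
    intro k
    rw [ck_Qk]; ring
  exact ⟨h.summable.abs, h.tsum_eq⟩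
end

section
/- For all x, y ∈ [0,1], the map t ↦ K_t(x,y) is differentiable and for every t ≥ 0 one has ∂_t K_t(x,y) = −K_t(x,y) + e^{−t}·P(x,y) + ∫₀¹ P(x,z)·K_t(z,y) dz, and also ∂_t K_t(x,y) = −K_t(x,y) + e^{−t}·P(x,y) + ∫₀¹ K_t(x,z)·P(z,y) dz (the forward and backward Kolmogorov equations for the kernel K_t). -/
open MeasureTheory

/-- The unit interval `[0,1]` as a (compact) subspace of `ℝ`. -/
abbrev I01 := Set.Icc (0:ℝ) 1

/-- Lebesgue measure on `[0,1]`, viewed as a measure on the subtype. -/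
noncomputable def muI : Measure I01 := Measure.comap Subtype.val volume

/-- The iterated kernels `P¹ = P`, `P^{k+1}(x,y) = ∫₀¹ P^k(x,z)·P(z,y) dz`
(`Pit P k` is `P^{k+1}`). -/
noncomputable def Pit (P : I01 → I01 → ℝ) : ℕ → I01 → I01 → ℝ
  | 0 => P
  | n + 1 => fun x y => ∫ z, Pit P n x z * P z y ∂muI

/-- `Q_k(x,y) = Σ_{j=1}^{k} (−1)^{k−j}·(k choose j)·P^j(x,y)` (so `Qit P 0 = 0`). -/
noncomputable def Qit (P : I01 → I01 → ℝ) (k : ℕ) (x y : I01) : ℝ :=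
  ∑ j ∈ Finset.Icc 1 k, (-1 : ℝ) ^ (k - j) * (k.choose j : ℝ) * Pit P (j - 1) x y

/-- `K_t(x,y) = Σ_{k=1}^{∞} (t^k/k!)·Q_k(x,y)` (the `k = 0` term of the `tsum`
vanishes since `Qit P 0 = 0`). -/
noncomputable def Kt (P : I01 → I01 → ℝ) (t : ℝ) (x y : I01) : ℝ :=
  ∑' k : ℕ, t ^ k / (k.factorial : ℝ) * Qit P k x y

instance muI_prob : IsProbabilityMeasure muI :=
  inferInstanceAs (IsProbabilityMeasure (volume : Measure unitInterval))

lemma int_cont {f : I01 → ℝ} (hf : Continuous f) : Integrable f muI :=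
  hf.integrable_of_hasCompactSupport (HasCompactSupport.of_compactSpace f)

lemma Pit_cont (P : I01 → I01 → ℝ) (hP : Continuous fun p : I01 × I01 => P p.1 p.2) (n : ℕ) :
    Continuous fun p : I01 × I01 => Pit P n p.1 p.2 := by
  induction n with
  | zero => exact hP
  | succ n ih =>
    simp only [Pit]
    apply continuous_parametric_integral_of_continuous (μ := muI) (s := Set.univ) ?_ isCompact_univ |>.congr
    · intro p
      simp only [Measure.restrict_univ]
      rfl
    · have h1 : Continuous fun q : (I01 × I01) × I01 => Pit P n q.1.1 q.2 :=
        ih.comp (f := fun q : (I01 × I01) × I01 => (q.1.1, q.2)) (by fun_prop)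
      have h2 : Continuous fun q : (I01 × I01) × I01 => P q.2 q.1.2 :=
        hP.comp (f := fun q : (I01 × I01) × I01 => (q.2, q.1.2)) (by fun_prop)
      exact h1.mul h2

lemma Pit_left (P : I01 → I01 → ℝ) (hP : Continuous fun p : I01 × I01 => P p.1 p.2) (n : ℕ) :
    ∀ x y, Pit P (n + 1) x y = ∫ z, P x z * Pit P n z y ∂muI := by
  induction n with
  | zero => intro x y; rfl
  | succ n ih =>
    intro x y
    have hn := Pit_cont P hP n
    have e1 : Pit P (n + 1 + 1) x y = ∫ z, (∫ w, P x w * Pit P n w z * P z y ∂muI) ∂muI := by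
      change (∫ z, Pit P (n + 1) x z * P z y ∂muI) = _
      congr 1; ext z
      rw [ih, integral_mul_const]
    have e2 : (∫ z, P x z * Pit P (n + 1) z y ∂muI)
        = ∫ w, (∫ z, P x w * Pit P n w z * P z y ∂muI) ∂muI := by
      congr 1; ext w
      change P x w * (∫ z, Pit P n w z * P z y ∂muI) = _
      rw [← integral_const_mul]
      simp only [mul_assoc]
    rw [e1, e2]
    apply integral_integral_swap
    have h1 : Continuous fun q : I01 × I01 => P x q.2 :=
      hP.comp (f := fun q : I01 × I01 => (x, q.2)) (by fun_prop)
    have h2 : Continuous fun q : I01 × I01 => Pit P n q.2 q.1 :=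
      hn.comp (f := fun q : I01 × I01 => (q.2, q.1)) (by fun_prop)
    have h3 : Continuous fun q : I01 × I01 => P q.1 y :=
      hP.comp (f := fun q : I01 × I01 => (q.1, y)) (by fun_prop)
    exact ((h1.mul h2).mul h3).integrable_of_hasCompactSupport
      (HasCompactSupport.of_compactSpace _)

lemma Pit_bound (P : I01 → I01 → ℝ) {M : ℝ} (hM0 : 0 ≤ M)
    (hM : ∀ x y, |P x y| ≤ M) (n : ℕ) : ∀ x y, |Pit P n x y| ≤ M ^ (n + 1) := by
  induction n with
  | zero => intro x y; simpa [Pit] using hM x y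
  | succ n ih =>
    intro x y
    have := norm_integral_le_of_norm_le_const (μ := muI) (f := fun z => Pit P n x z * P z y)
      (C := M ^ (n + 1) * M) (Filter.Eventually.of_forall fun z => by
        rw [norm_mul]
        exact mul_le_mul (ih x z) (hM z y) (norm_nonneg _) (by positivity))
    simpa [Pit, pow_succ] using this

/-- binomial transform -/
noncomputable def Sb (k : ℕ) (g : ℕ → ℝ) : ℝ :=
  ∑ j ∈ Finset.range k, (-1 : ℝ) ^ (k + 1 + j) * (k.choose (j + 1) : ℝ) * g j

lemma Qit_eq (P : I01 → I01 → ℝ) (k : ℕ) (x y : I01) :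
    Qit P k x y = Sb k (fun j => Pit P j x y) := by
  unfold Qit Sb
  have : Finset.Icc 1 k = Finset.Ico 1 (k + 1) := by ext; simp
  rw [this, Finset.sum_Ico_eq_sum_range]
  apply Finset.sum_congr (by simp)
  intro j hj
  have hj' : j < k := Finset.mem_range.1 hj
  obtain ⟨m, rfl⟩ := Nat.exists_eq_add_of_lt hj'
  have e1 : j + m + 1 - (1 + j) = m := by omega
  have e2 : j + m + 1 + 1 + j = m + 2 * (j + 1) := by ring
  rw [e1, e2, pow_add, pow_mul, add_comm 1 j]
  simp

lemma Sb_succ (k : ℕ) (g : ℕ → ℝ) :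
    Sb (k + 1) g = -Sb k g + (-1) ^ k * g 0 + Sb k (fun j => g (j + 1)) := by
  have h1 : Sb (k + 1) g = ∑ j ∈ Finset.range (k + 1), (-1 : ℝ) ^ (k + j) * (k.choose j : ℝ) * g j
      + ∑ j ∈ Finset.range (k + 1), (-1 : ℝ) ^ (k + j) * (k.choose (j + 1) : ℝ) * g j := by
    unfold Sb
    rw [← Finset.sum_add_distrib]
    refine Finset.sum_congr rfl fun j _ => ?_
    rw [Nat.choose_succ_succ]
    push_cast
    ring
  rw [h1, Finset.sum_range_succ', Finset.sum_range_succ _ k]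
  have h2 : ∑ j ∈ Finset.range k, (-1 : ℝ) ^ (k + j) * (k.choose (j + 1) : ℝ) * g j = - Sb k g := by
    unfold Sb
    rw [← Finset.sum_neg_distrib]
    refine Finset.sum_congr rfl fun j _ => ?_
    ring
  have h3 : ∑ j ∈ Finset.range k, (-1 : ℝ) ^ (k + (j + 1)) * (k.choose (j + 1) : ℝ) * g (j + 1)
      = Sb k (fun j => g (j + 1)) := by
    unfold Sb
    refine Finset.sum_congr rfl fun j _ => ?_
    ring
  rw [h2, h3]
  simp
  ring

lemma Sb_bound (k : ℕ) (g : ℕ → ℝ) {M : ℝ} (hM0 : 0 ≤ M) (hg : ∀ j, |g j| ≤ M ^ (j + 1)) :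
    |Sb k g| ≤ (M + 1) ^ k := by
  rw [add_pow, Finset.sum_range_succ']
  unfold Sb
  refine (Finset.abs_sum_le_sum_abs _ _).trans ?_
  refine le_add_of_le_of_nonneg (Finset.sum_le_sum fun j _ => ?_) (by positivity)
  rw [abs_mul, abs_mul, abs_pow, abs_neg, abs_one, one_pow, one_pow, one_mul, mul_one,
    Nat.abs_cast, mul_comm]
  exact mul_le_mul_of_nonneg_right (hg j) (by positivity)

lemma summ_exp (t C : ℝ) : Summable fun k : ℕ => t ^ k / (k.factorial : ℝ) * C ^ k := by
  refine (Real.summable_pow_div_factorial (t * C)).congr fun k => ?_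
  rw [mul_pow]; ring

lemma summ_a (a : ℕ → ℝ) {C D : ℝ} (ha : ∀ k, |a k| ≤ D * C ^ k) (t : ℝ) :
    Summable fun k : ℕ => t ^ k / (k.factorial : ℝ) * a k := by
  refine Summable.of_norm_bounded ((summ_exp |t| C).mul_left D) fun k => ?_
  rw [norm_mul, norm_div, norm_pow, Real.norm_eq_abs, Real.norm_eq_abs, Real.norm_eq_abs,
    Nat.abs_cast]
  calc |t| ^ k / (k.factorial : ℝ) * |a k| ≤ |t| ^ k / (k.factorial : ℝ) * (D * C ^ k) :=
        mul_le_mul_of_nonneg_left (ha k) (by positivity)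
    _ = _ := by ring

lemma deriv_a (a : ℕ → ℝ) {C : ℝ} (hC : 0 ≤ C) (ha : ∀ k, |a k| ≤ C ^ k) (t : ℝ) :
    HasDerivAt (fun s : ℝ => ∑' k : ℕ, s ^ k / (k.factorial : ℝ) * a k)
      (∑' k : ℕ, t ^ k / (k.factorial : ℝ) * a (k + 1)) t := by
  have hid : ∀ (s c : ℝ) (k : ℕ), ((k + 1 : ℕ) : ℝ) * s ^ (k + 1 - 1) / ((k + 1).factorial : ℝ) * c
      = s ^ k / (k.factorial : ℝ) * c := by
    intro s c k
    rw [Nat.factorial_succ]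
    have : (k.factorial : ℝ) ≠ 0 := by positivity
    have : ((k + 1 : ℕ) : ℝ) ≠ 0 := by positivity
    push_cast at *
    field_simp
  set R := |t| + 1 with hR
  have hu : Summable fun k : ℕ => (k : ℝ) * R ^ (k - 1) / (k.factorial : ℝ) * C ^ k := by
    rw [← summable_nat_add_iff 1]
    simp only [hid]
    refine ((summ_exp R C).mul_right C).congr fun k => ?_
    ring
  have ht : t ∈ Metric.ball (0 : ℝ) R := by simp [hR]
  have key := hasDerivAt_tsum_of_isPreconnected (𝕜 := ℝ) (t := Metric.ball (0 : ℝ) R)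
    (g := fun k s => s ^ k / (k.factorial : ℝ) * a k)
    (g' := fun k s => (k : ℝ) * s ^ (k - 1) / (k.factorial : ℝ) * a k) (y₀ := t) (y := t)
    hu Metric.isOpen_ball (convex_ball _ _).isPreconnected
    (fun k s _ => ((hasDerivAt_pow k s).div_const _).mul_const _)
    (fun k s hs => by
      have hs' : |s| ≤ R := by
        have := Metric.mem_ball.1 hs
        rw [dist_zero_right, Real.norm_eq_abs] at this
        exact this.le
      rw [norm_mul, norm_div, norm_mul, norm_pow, Real.norm_eq_abs, Real.norm_eq_abs,
        Real.norm_eq_abs, Real.norm_eq_abs, Nat.abs_cast, Nat.abs_cast]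
      have := ha k
      gcongr) ht (summ_a a (D := 1) (C := C) (by simpa using ha) t) ht
  refine key.congr_deriv ?_
  have hs : Summable fun k : ℕ => (k : ℝ) * t ^ (k - 1) / (k.factorial : ℝ) * a k := by
    rw [← summable_nat_add_iff 1]
    simp only [hid]
    exact summ_a (fun k => a (k + 1)) (D := C) (C := C)
      (fun k => by rw [mul_comm, ← pow_succ]; exact ha _) t
  rw [hs.tsum_eq_zero_add]
  simp only [hid]
  simp

/-- Abstract form: `a k` is the Q-sequence, `w z * b k z` its image under the kernel. -/
lemma main_aux (a : ℕ → ℝ) (p : ℝ) (w : I01 → ℝ) (b : ℕ → I01 → ℝ) {C M : ℝ} (hC : 0 ≤ C)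
    (hM : 0 ≤ M)
    (ha : ∀ k, |a k| ≤ C ^ k) (hw : Continuous w) (hb : ∀ k, Continuous (b k))
    (hwM : ∀ z, |w z| ≤ M) (hbC : ∀ k z, |b k z| ≤ C ^ k)
    (hrec : ∀ k, a (k + 1) = -a k + (-1) ^ k * p + ∫ z, w z * b k z ∂muI) (t : ℝ) :
    HasDerivAt (fun s : ℝ => ∑' k : ℕ, s ^ k / (k.factorial : ℝ) * a k)
      (-(∑' k : ℕ, t ^ k / (k.factorial : ℝ) * a k) + Real.exp (-t) * p
        + ∫ z, w z * (∑' k : ℕ, t ^ k / (k.factorial : ℝ) * b k z) ∂muI) t := by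
  refine (deriv_a a hC ha t).congr_deriv (Eq.symm ?_)
  have h1 := (summ_a a (D := 1) (C := C) (by simpa using ha) t).hasSum.neg
  have h2 : HasSum (fun k : ℕ => t ^ k / (k.factorial : ℝ) * ((-1) ^ k * p)) (Real.exp (-t) * p) := by
    have := (NormedSpace.expSeries_div_hasSum_exp (-t)).mul_right p
    rw [← Real.exp_eq_exp_ℝ] at this
    refine this.congr_fun fun k => ?_
    rw [neg_pow]; ring
  have h3 : HasSum (fun k : ℕ => ∫ z, w z * (t ^ k / (k.factorial : ℝ) * b k z) ∂muI)
      (∫ z, w z * (∑' k : ℕ, t ^ k / (k.factorial : ℝ) * b k z) ∂muI) := by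
    apply hasSum_integral_of_dominated_convergence
      (fun k _ => M * (|t| ^ k / (k.factorial : ℝ) * C ^ k))
    · intro k
      exact (hw.mul (continuous_const.mul (hb k))).aestronglyMeasurable
    · intro k
      refine Filter.Eventually.of_forall fun z => ?_
      rw [norm_mul, norm_mul, norm_div, norm_pow, Real.norm_eq_abs, Real.norm_eq_abs,
        Real.norm_eq_abs, Real.norm_eq_abs, Nat.abs_cast]
      have h1 := hwM z
      have h2 := hbC k z
      gcongr
    · exact Filter.Eventually.of_forall fun z => (summ_exp |t| C).mul_left M
    · exact integrable_const _
    · exact Filter.Eventually.of_forall fun z =>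
        ((summ_a (fun k => b k z) (D := 1) (C := C) (by simpa using fun k => hbC k z) t).hasSum).mul_left _
  refine ((h1.add h2).add h3).tsum_eq.symm.trans (tsum_congr fun k => ?_)
  have : (∫ z, w z * (t ^ k / (k.factorial : ℝ) * b k z) ∂muI)
      = t ^ k / (k.factorial : ℝ) * ∫ z, w z * b k z ∂muI := by
    rw [← integral_const_mul]
    congr 1; ext z; ring
  rw [this, hrec]; ring

lemma Sb_integral (k : ℕ) (w : I01 → ℝ) (hw : Continuous w) (g : ℕ → I01 → ℝ)
    (hg : ∀ j, Continuous (g j)) :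
    (∫ z, w z * Sb k (fun j => g j z) ∂muI) = Sb k (fun j => ∫ z, w z * g j z ∂muI) := by
  unfold Sb
  simp only [Finset.mul_sum]
  rw [integral_finsetSum]
  · refine Finset.sum_congr rfl fun j _ => ?_
    rw [← integral_const_mul]
    congr 1; ext z; ring
  · intro j _
    exact int_cont (hw.mul (continuous_const.mul (hg j)))

lemma Sb_cont (k : ℕ) (g : ℕ → I01 → ℝ) (hg : ∀ j, Continuous (g j)) :
    Continuous fun z => Sb k (fun j => g j z) := by
  unfold Sb
  exact continuous_finsetSum _ fun j _ => continuous_const.mul (hg j)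

/-- Appendix 1 of the paper: the forward and backward Kolmogorov equations for the
kernel `K_t`: for all `x, y` the map `t ↦ K_t(x,y)` is differentiable and for `t ≥ 0`,
`∂_t K_t(x,y) = −K_t(x,y) + e^{−t}·P(x,y) + ∫₀¹ P(x,z)·K_t(z,y) dz`
`           = −K_t(x,y) + e^{−t}·P(x,y) + ∫₀¹ K_t(x,z)·P(z,y) dz`. -/
theorem Kt_kolmogorov_equations
    (P : I01 → I01 → ℝ) (hP : Continuous fun p : I01 × I01 => P p.1 p.2) :
    ∀ (x y : I01) (t : ℝ), 0 ≤ t →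
      HasDerivAt (fun s : ℝ => Kt P s x y)
        (-Kt P t x y + Real.exp (-t) * P x y + ∫ z, P x z * Kt P t z y ∂muI) t ∧
      HasDerivAt (fun s : ℝ => Kt P s x y)
        (-Kt P t x y + Real.exp (-t) * P x y + ∫ z, Kt P t x z * P z y ∂muI) t := by
  intro x y t _
  obtain ⟨M, hM⟩ : ∃ M, ∀ x y, |P x y| ≤ M := by
    obtain ⟨M, hM⟩ := isCompact_univ.exists_bound_of_continuousOn hP.continuousOn
    exact ⟨M, fun x y => hM (x, y) (Set.mem_univ _)⟩
  have hM0 : 0 ≤ M := (abs_nonneg _).trans (hM x y)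
  have hC : 0 ≤ M + 1 := by linarith
  have hleft : ∀ j (u : I01), Continuous fun z => Pit P j u z := fun j u =>
    (Pit_cont P hP j).comp (f := fun z : I01 => (u, z)) (by fun_prop)
  have hright : ∀ j (v : I01), Continuous fun z => Pit P j z v := fun j v =>
    (Pit_cont P hP j).comp (f := fun z : I01 => (z, v)) (by fun_prop)
  have hb : ∀ k u v, |Sb k (fun j => Pit P j u v)| ≤ (M + 1) ^ k := fun k u v =>
    Sb_bound k _ hM0 fun j => Pit_bound P hM0 hM j u v
  simp only [Kt, Qit_eq]
  constructor
  · refine main_aux _ (P x y) (P x) (fun k z => Sb k (fun j => Pit P j z y)) hC hM0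
      (fun k => hb k x y) (hleft 0 x) (fun k => Sb_cont k _ fun j => hright j y) (hM x)
      (fun k z => hb k z y) (fun k => ?_) t
    rw [Sb_succ, Sb_integral k (P x) (hleft 0 x) _ (fun j => hright j y)]
    simp only [Pit_left P hP]
    rfl
  · simp only [mul_comm _ (P _ y)]
    rw [mul_comm (P x y)]
    refine main_aux _ (P x y) (fun z => P z y) (fun k z => Sb k (fun j => Pit P j x z)) hC hM0
      (fun k => hb k x y) (hright 0 y) (fun k => Sb_cont k _ fun j => hleft j x) (fun z => hM z y)
      (fun k z => hb k x z) (fun k => ?_) t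
    rw [Sb_succ, Sb_integral k (fun z => P z y) (hright 0 y) _ (fun j => hleft j x)]
    simp only [mul_comm (P _ y)]
    rfl
end
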